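/- Let x_s ∈ ℝ and x_q > 0. If x_ext > 0 satisfies both g₀₀(x_ext) = 0 and g₀₀'(x_ext) = 0 (a degenerate, extremal horizon), then x_ext² = x_q² − 1/(4·x_q²), and consequently x_q² > 1/2. -/

import Mathlib

/-!
Multiplying by `x` clears the `x_s` term up to a constant:
`x g₀₀(x) = x - x_s + x_q² ((2/3)(x³ - x √(x⁴+1)) + (4/3) ∫_x^∞ dt/√(t⁴+1))`.
Its derivative simplifies to `1 + 2 x_q² (x² - √(x⁴+1))` (`hasDerivAt_mul_g₀₀`). At a degenerate
horizon this derivative `g₀₀ + x g₀₀'` vanishes, so `√(x⁴+1) = x² + 1/(2 x_q²)`; squaring gives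
the formula for `x²`, and `x² > 0` gives the bound on `x_q²`. Differentiating the tail integral
relies on integrability of `1/√(t⁴+1)`, by comparison with `2/(1+t²)`.
-/

open Real MeasureTheory

/-- The metric function `f` of the Einstein-Born-Infeld black hole. -/
noncomputable def f (x : ℝ) : ℝ :=
  (2 / 3) * (x ^ 4 - x ^ 2 * Real.sqrt (x ^ 4 + 1))
    + (4 / 3) * x * ∫ t in Set.Ioi x, 1 / Real.sqrt (t ^ 4 + 1)

/-- The time-time metric component `g₀₀(x) = 1 - x_s/x + (x_q^2/x^2) * f x`
of the Einstein-Born-Infeld black hole, in dimensionless variables. -/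
noncomputable def g₀₀ (xs xq : ℝ) (x : ℝ) : ℝ :=
  1 - xs / x + (xq ^ 2 / x ^ 2) * f x

theorem integrable_one_div_sqrt : Integrable (fun t : ℝ => 1 / Real.sqrt (t ^ 4 + 1)) := by
  refine (integrable_inv_one_add_sq.const_mul 2).mono' ?_ (Filter.Eventually.of_forall fun t => ?_)
  · exact (by fun_prop : Measurable fun t : ℝ => 1 / Real.sqrt (t ^ 4 + 1)).aestronglyMeasurable
  · have hS : (1 + t ^ 2) / 2 ≤ Real.sqrt (t ^ 4 + 1) :=
      Real.le_sqrt_of_sq_le (by nlinarith [sq_nonneg (t ^ 2 - 1), sq_nonneg (t ^ 2 + 1)])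
    have hp : 0 < (1 + t ^ 2) / 2 := by positivity
    rw [Real.norm_of_nonneg (by positivity)]
    calc 1 / Real.sqrt (t ^ 4 + 1) ≤ 1 / ((1 + t ^ 2) / 2) := one_div_le_one_div_of_le hp hS
      _ = 2 * (1 + t ^ 2)⁻¹ := by field_simp

theorem hasDerivAt_tail (x : ℝ) :
    HasDerivAt (fun y : ℝ => ∫ t in Set.Ioi y, 1 / Real.sqrt (t ^ 4 + 1))
      (-(1 / Real.sqrt (x ^ 4 + 1))) x := by
  have hcont : Continuous fun t : ℝ => 1 / Real.sqrt (t ^ 4 + 1) := by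
    refine continuous_const.div (by fun_prop) fun t => ?_
    positivity
  have heq : (fun y : ℝ => ∫ t in Set.Ioi y, 1 / Real.sqrt (t ^ 4 + 1)) =
      fun y => (∫ t in Set.Ioi (0 : ℝ), 1 / Real.sqrt (t ^ 4 + 1))
        - ∫ t in (0 : ℝ)..y, 1 / Real.sqrt (t ^ 4 + 1) := by
    funext y
    rw [← intervalIntegral.integral_Ioi_sub_Ioi' integrable_one_div_sqrt.integrableOn
      integrable_one_div_sqrt.integrableOn]
    ring
  rw [heq]
  exact (hcont.integral_hasStrictDerivAt 0 x).hasDerivAt.const_sub _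

/-- The terms in `1 / √(x⁴+1)` coming from the square root and from the tail integral combine,
because `x⁴ + 1` is the square of `√(x⁴+1)`, into a multiple of `√(x⁴+1)` itself. -/
theorem hasDerivAt_mul_g₀₀ (xs xq x : ℝ) (hx : 0 < x) :
    HasDerivAt (fun y => y * g₀₀ xs xq y)
      (1 + 2 * xq ^ 2 * (x ^ 2 - Real.sqrt (x ^ 4 + 1))) x := by
  have hpos : 0 < x ^ 4 + 1 := by positivity
  have hS : 0 < Real.sqrt (x ^ 4 + 1) := Real.sqrt_pos.2 hpos
  have hSS : Real.sqrt (x ^ 4 + 1) ^ 2 = x ^ 4 + 1 := Real.sq_sqrt hpos.le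
  have hsqrt : HasDerivAt (fun y : ℝ => Real.sqrt (y ^ 4 + 1))
      ((4 * x ^ 3) / (2 * Real.sqrt (x ^ 4 + 1))) x := by
    have h := ((hasDerivAt_pow 4 x).add_const 1).sqrt hpos.ne'
    simpa using h
  have hmain := ((hasDerivAt_id x).sub_const xs).add
    (((((hasDerivAt_pow 3 x).sub ((hasDerivAt_id x).mul hsqrt)).const_mul (2 / 3)).add
      ((hasDerivAt_tail x).const_mul (4 / 3))).const_mul (xq ^ 2))
  refine (hmain.congr_of_eventuallyEq ?_).congr_deriv ?_
  · filter_upwards [lt_mem_nhds hx] with y hy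
    simp only [g₀₀, f, Pi.add_apply, Pi.sub_apply, Pi.mul_apply, id]
    field_simp
  · generalize Real.sqrt (x ^ 4 + 1) = S at *
    simp only [id]
    field_simp
    push_cast
    linear_combination (4 * xq ^ 2) * hSS

theorem differentiableAt_g₀₀ (xs xq x : ℝ) (hx : 0 < x) : DifferentiableAt ℝ (g₀₀ xs xq) x := by
  have h := (hasDerivAt_mul_g₀₀ xs xq x hx).differentiableAt.div differentiableAt_id hx.ne'
  refine h.congr_of_eventuallyEq ?_
  filter_upwards [lt_mem_nhds hx] with y hy
  simp [hy.ne']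

/-- If `x_q > 0` and `x_ext > 0` is a degenerate (extremal) horizon, i.e.
`g₀₀(x_ext) = 0` and `g₀₀'(x_ext) = 0`, then `x_ext^2 = x_q^2 - 1/(4*x_q^2)`
and consequently `x_q^2 > 1/2`. -/
theorem extremal_horizon (xs xq : ℝ) (hq : 0 < xq) (xext : ℝ) (hx : 0 < xext)
    (hzero : g₀₀ xs xq xext = 0) (hcrit : deriv (g₀₀ xs xq) xext = 0) :
    xext ^ 2 = xq ^ 2 - 1 / (4 * xq ^ 2) ∧ xq ^ 2 > 1 / 2 := by
  have hprod := (hasDerivAt_id xext).mul (differentiableAt_g₀₀ xs xq xext hx).hasDerivAt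
  have huniq := (hasDerivAt_mul_g₀₀ xs xq xext hx).unique hprod
  rw [hzero, hcrit, mul_zero, mul_zero, add_zero] at huniq
  have hSS : Real.sqrt (xext ^ 4 + 1) ^ 2 = xext ^ 4 + 1 := Real.sq_sqrt (by positivity)
  generalize Real.sqrt (xext ^ 4 + 1) = S at *
  have hq2 : 0 < xq ^ 2 := by positivity
  -- Squaring `2 xq² S = 1 + 2 xq² x²` cancels the quartic terms in `x`.
  have hsq : 4 * xq ^ 2 * xext ^ 2 = 4 * (xq ^ 2) ^ 2 - 1 := by
    linear_combination (4 * (xq ^ 2) ^ 2) * hSS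
      + (1 + 2 * xq ^ 2 * xext ^ 2 + 2 * xq ^ 2 * S) * huniq
  refine ⟨?_, ?_⟩
  · field_simp
    linear_combination hsq
  · have : 0 < 4 * xq ^ 2 * xext ^ 2 := by positivity
    nlinarith
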